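/- arXiv:2003.02521 — 2 statements merged into one kernel-verified Lean document; each statement's English description precedes it below -/
import Mathlib

section
/- (Existence of n-acyclic groups) For every n ∈ ℕ and every finite nonempty set X, there exists a finite group G generated by (a copy of) X whose girth under X is at least n; equivalently, every nonempty word w₁⋯w_m with each wᵢ ∈ X ∪ X⁻¹, with w_{i+1} ≠ wᵢ⁻¹ for all 1 ≤ i < m, and with m < n, satisfies w₁⋯w_m ≠ e in G. -/
namespace FQA

/-- A finite group generated by (a copy of) `X` whose girth under `X` is at least
`n`: every nonempty word `w₁ ⋯ w_m` with letters in `X ∪ X⁻¹`, without consecutive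
mutually inverse letters, and of length `m < n`, has product different from the
identity. -/
structure NAcyclicGroup (n : ℕ) (X : Type) where
  G : Type
  [grp : Group G]
  [fin : Finite G]
  f : X → G
  inj : Function.Injective f
  gen : Subgroup.closure (Set.range f) = ⊤
  girth : ∀ (m : ℕ) (w : Fin m → G), 0 < m → m < n →
      (∀ i, ∃ x : X, w i = f x ∨ w i = (f x)⁻¹) →
      (∀ (i : ℕ) (hi : i + 1 < m),
          w ⟨i + 1, hi⟩ ≠ (w ⟨i, Nat.lt_of_succ_lt hi⟩)⁻¹) →
      (List.ofFn w).prod ≠ 1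

/-!
Left translation by a group element, restricted to the points of a finite set `S` that it keeps in
`S`, is injective and so extends to a permutation of `S`. Doing this for each generator of a free
group makes the free group act on `S`. If `S` contains the values of all suffixes of a word `L`,
then applying the letters of `L` from right to left never leaves `S`, so `L` carries `1 ∈ S` to its
own value in the free group. Hence every finite set of elements of the free group injects into a
finite quotient. Apply this to the elements represented by short words: a nonempty reduced word
represents a nontrivial element.
-/

section Translation

variable {G : Type*} [Group G]

/-- The permutation `σ` of `S` extends the partial left translation by `g`: it agrees with
`v ↦ g * v` wherever the latter stays in `S`, and is unconstrained elsewhere. -/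
def ExtendsTranslation {S : Set G} (g : G) (σ : Equiv.Perm S) : Prop :=
  ∀ v : S, g * v ∈ S → (σ v : G) = g * v

theorem ExtendsTranslation.inv {S : Set G} {g : G} {σ : Equiv.Perm S}
    (hσ : ExtendsTranslation g σ) : ExtendsTranslation g⁻¹ σ⁻¹ := by
  intro v hv
  have hσv : σ ⟨g⁻¹ * v, hv⟩ = v :=
    Subtype.ext <| by simpa using hσ ⟨g⁻¹ * v, hv⟩ (by simp)
  rw [Equiv.Perm.inv_eq_iff_eq.mpr hσv.symm]

theorem exists_extendsTranslation {S : Set G} (hS : S.Finite) (g : G) :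
    ∃ σ : Equiv.Perm S, ExtendsTranslation g σ := by
  lift S to Finset G using hS
  exact Set.MapsTo.exists_equiv_extend_of_card_eq (s := {v : S | g * v ∈ S})
    (f := fun v => g * v) (Fintype.card_coe S) (fun _ hv => hv)
    ((mul_right_injective g).comp Subtype.val_injective).injOn

end Translation

section FreeGroup

open FreeGroup

variable {X : Type*}

theorem extendsTranslation_lift_mk_singleton {S : Set (FreeGroup X)} {σ : X → Equiv.Perm S}
    (hσ : ∀ x, ExtendsTranslation (of x) (σ x)) (a : X × Bool) :
    ExtendsTranslation (mk [a]) (lift σ (mk [a])) := by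
  obtain ⟨x, _ | _⟩ := a
  · simpa [of, inv_mk, invRev] using (hσ x).inv
  · simpa [of] using hσ x

theorem lift_mk_apply_one {S : Set (FreeGroup X)} {σ : X → Equiv.Perm S}
    (hσ : ∀ x, ExtendsTranslation (of x) (σ x)) (one_mem : 1 ∈ S) {L : List (X × Bool)}
    (hL : ∀ L', L' <:+ L → mk L' ∈ S) :
    (lift σ (mk L) ⟨1, one_mem⟩ : FreeGroup X) = mk L := by
  induction L with
  | nil => simp [one_eq_mk]
  | cons a L ih =>
    have hLa : mk (a :: L) = mk [a] * mk L := by rw [mul_mk, List.singleton_append]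
    have ih := ih fun L' hL' => hL L' (hL'.trans (List.suffix_cons a L))
    have step := extendsTranslation_lift_mk_singleton hσ a (lift σ (mk L) ⟨1, one_mem⟩)
    rw [ih, ← hLa] at step
    rw [hLa, _root_.map_mul, Equiv.Perm.mul_apply, ← hLa]
    exact step (hL _ List.suffix_rfl)

theorem exists_finite_forall_suffix_mem {T : Set (FreeGroup X)} (hT : T.Finite) :
    ∃ S : Set (FreeGroup X), S.Finite ∧ 1 ∈ S ∧
      ∀ g ∈ T, ∃ L, mk L = g ∧ ∀ L', L' <:+ L → mk L' ∈ S := by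
  classical
  refine ⟨insert 1 (⋃ g ∈ T, {h | h ∈ g.toWord.tails.map mk}), ?_, Set.mem_insert _ _, ?_⟩
  · exact (hT.biUnion fun g _ => List.finite_toSet _).insert 1
  · refine fun g hg => ⟨g.toWord, mk_toWord, fun L' hL' => Set.mem_insert_of_mem _ ?_⟩
    exact Set.mem_biUnion hg (List.mem_map_of_mem ((List.mem_tails _ _).mpr hL'))

theorem exists_finiteIndexNormalSubgroup_injOn {T : Set (FreeGroup X)} (hT : T.Finite) :
    ∃ K : FiniteIndexNormalSubgroup (FreeGroup X),
      Set.InjOn (QuotientGroup.mk' K.toSubgroup) T := by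
  obtain ⟨S, hS, one_mem, hTS⟩ := exists_finite_forall_suffix_mem hT
  choose σ hσ using fun x : X => exists_extendsTranslation hS (of x)
  have := hS.to_subtype
  have orbit_one : ∀ g ∈ T, (lift σ g ⟨1, one_mem⟩ : FreeGroup X) = g := by
    intro g hg
    obtain ⟨L, rfl, hL⟩ := hTS g hg
    exact lift_mk_apply_one hσ one_mem hL
  refine ⟨.ofSubgroup (lift σ).ker, fun g hg h hh hgh => ?_⟩
  have lift_eq : lift σ g = lift σ h := (lift σ).eq_iff.mpr (QuotientGroup.eq.mp hgh.symm)
  rw [← orbit_one g hg, lift_eq, orbit_one h hh]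

/-- The ball of radius `N` around `1` for the word metric of the free group, described by all words
of length at most `N`, reduced or not. -/
def wordBall (X : Type*) (N : ℕ) : Set (FreeGroup X) :=
  {g | ∃ L : List (X × Bool), L.length ≤ N ∧ mk L = g}

theorem finite_wordBall [Finite X] (N : ℕ) : (wordBall X N).Finite :=
  (List.finite_length_le (X × Bool) N).image mk

theorem mk_mem_wordBall {L : List (X × Bool)} {N : ℕ} (hL : L.length ≤ N) : mk L ∈ wordBall X N :=
  ⟨L, hL, rfl⟩

theorem mk_ne_one_of_isReduced {L : List (X × Bool)} (hL : IsReduced L) (hne : L ≠ []) :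
    mk L ≠ 1 := by
  classical
  rwa [Ne, ← toWord_eq_nil_iff, toWord_mk, hL.reduce_eq]

variable {G : Type*} [Group G]

theorem exists_isReduced_lift_mk_eq_prod {f : X → G} {w : List G}
    (letters : ∀ g ∈ w, ∃ x, g = f x ∨ g = (f x)⁻¹) (reduced : w.IsChain fun g h => h ≠ g⁻¹) :
    ∃ L : List (X × Bool), IsReduced L ∧ L.length = w.length ∧ lift f (mk L) = w.prod := by
  let letter : X × Bool → G := fun a => cond a.2 (f a.1) (f a.1)⁻¹
  have hw : w ∈ Set.range (List.map letter) := by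
    rw [Set.range_list_map]
    intro g hg
    obtain ⟨x, rfl | rfl⟩ := letters g hg
    exacts [⟨(x, true), rfl⟩, ⟨(x, false), rfl⟩]
  obtain ⟨L, rfl⟩ := hw
  refine ⟨L, ?_, List.length_map letter |>.symm, lift_mk⟩
  refine ((List.isChain_map letter).mp reduced).imp ?_
  rintro ⟨x, b⟩ ⟨y, c⟩ hbc rfl
  cases b <;> cases c <;> simp_all [letter]

theorem prod_ne_one_of_injOn {φ : FreeGroup X →* G} {N : ℕ}
    (hφ : Set.InjOn φ (wordBall X N)) {w : List G} (hne : w ≠ []) (hN : w.length ≤ N)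
    (letters : ∀ g ∈ w, ∃ x, g = φ (of x) ∨ g = (φ (of x))⁻¹)
    (reduced : w.IsChain fun g h => h ≠ g⁻¹) : w.prod ≠ 1 := by
  obtain ⟨L, hL, hlen, hprod⟩ := exists_isReduced_lift_mk_eq_prod letters reduced
  have hφL : φ (mk L) = w.prod := by rw [← hprod, lift_unique φ fun _ => rfl]
  have hL_ne : mk L ≠ 1 := mk_ne_one_of_isReduced hL <| by
    rwa [← List.length_pos_iff, hlen, List.length_pos_iff]
  rw [← hφL, ← map_one φ]
  exact hφ.ne (mk_mem_wordBall (hlen.trans_le hN)) (mk_mem_wordBall N.zero_le) hL_ne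

theorem closure_range_comp_of_eq_top {φ : FreeGroup X →* G} (hφ : Function.Surjective φ) :
    Subgroup.closure (Set.range fun x => φ (of x)) = ⊤ := by
  rw [Set.range_comp', ← MonoidHom.map_closure, closure_range_of,
    Subgroup.map_top_of_surjective φ hφ]

end FreeGroup

/-- **Existence of `n`-acyclic groups.** For every `n ∈ ℕ` and every finite nonempty
set `X`, there exists a finite group generated by a copy of `X` whose girth under `X`
is at least `n`. -/
theorem acyclic_groups_exist (n : ℕ) (X : Type) [Finite X] [Nonempty X] :
    Nonempty (NAcyclicGroup n X) := by
  -- Radius `n + 1` rather than `n`: the generators must stay distinct also when `n = 0`.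
  obtain ⟨K, hK⟩ := exists_finiteIndexNormalSubgroup_injOn (finite_wordBall (X := X) (n + 1))
  have of_mem (x : X) : FreeGroup.of x ∈ wordBall X (n + 1) := mk_mem_wordBall (by simp)
  refine ⟨{
    G := FreeGroup X ⧸ K.toSubgroup
    f := fun x => QuotientGroup.mk' K.toSubgroup (FreeGroup.of x)
    inj := ?_
    gen := closure_range_comp_of_eq_top (QuotientGroup.mk'_surjective _)
    girth := ?_ }⟩
  · exact fun x y hxy => FreeGroup.of_injective (hK (of_mem x) (of_mem y) hxy)
  · intro m w hm hmn letters reduced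
    refine prod_ne_one_of_injOn hK ?_ ?_ ?_ ?_
    · simpa using hm.ne'
    · exact List.length_ofFn.trans_le (by omega)
    · exact List.forall_mem_ofFn_iff.mpr letters
    · exact List.isChain_ofFn.mpr reduced

end FQA
end

section
/- (Simple Product Lemma) Let Σ be a finitely closed set of FDs and UIDs, let I₀ be a finite individualizing instance, let I be a finite superinstance of I₀, and let G be a finite group generated by the fact labels Λ(I) whose girth under Λ(I) is at least 2k+1. If I is (k·(w+1))-sound for the class ACQ, I₀, and Σ, where w is the maximal arity of a relation of σ, then the product (I, I₀) ⊗ G preserving I₀ is k-sound for the class of all Boolean CQs, I₀, and Σ. -/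
namespace FQA

/-- A relational signature: a finite set of relation names, each with an arity `≥ 1`. -/
structure Sig where
  Rel : Type
  rel_fin : Finite Rel
  ar : Rel → ℕ
  ar_pos : ∀ R, 1 ≤ ar R

/-- The positions of a signature: pairs of a relation and an index into its arity. -/
abbrev Sig.Pos (σ : Sig) : Type := Σ R : σ.Rel, Fin (σ.ar R)

/-- A fact `R(a₁, …, a_{ar R})` with elements from `α`. -/
abbrev Fact (σ : Sig) (α : Type) : Type := Σ R : σ.Rel, Fin (σ.ar R) → α

/-- An instance is a set of facts. -/
abbrev Inst (σ : Sig) (α : Type) : Type := Set (Fact σ α)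

variable {σ : Sig} {α β : Type}

/-- Element `a` occurs at position `p` in some fact of the instance `I`. -/
def occursAt (I : Inst σ α) (p : σ.Pos) (a : α) : Prop :=
  ∃ t : Fin (σ.ar p.1) → α, (⟨p.1, t⟩ : Fact σ α) ∈ I ∧ t p.2 = a

/-- The active domain of an instance: the elements occurring in some fact. -/
def activeDom (I : Inst σ α) : Set α :=
  {a | ∃ F : Fact σ α, F ∈ I ∧ ∃ i, F.2 i = a}

/-- A unary inclusion dependency `src ⊆ dst` (nontrivial: `src ≠ dst`). -/
structure UID (σ : Sig) where
  src : σ.Pos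
  dst : σ.Pos
  ne : src ≠ dst

/-- The reverse of a UID. -/
def UID.rev (τ : UID σ) : UID σ := ⟨τ.dst, τ.src, τ.ne.symm⟩

/-- An instance satisfies a UID if every element occurring at `src` also occurs at `dst`. -/
def satUID (I : Inst σ α) (τ : UID σ) : Prop :=
  ∀ a, occursAt I τ.src a → occursAt I τ.dst a

/-- A functional dependency `R^L → R^r`, with `L` nonempty and `r ∉ L`. -/
structure FD (σ : Sig) where
  rel : σ.Rel
  lhs : Set (Fin (σ.ar rel))
  rhs : Fin (σ.ar rel)
  lhs_nonempty : lhs.Nonempty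
  rhs_not_mem : rhs ∉ lhs

/-- An instance satisfies an FD if any two facts of `rel` agreeing on `lhs` agree on `rhs`. -/
def satFD (I : Inst σ α) (φ : FD σ) : Prop :=
  ∀ t u : Fin (σ.ar φ.rel) → α,
    (⟨φ.rel, t⟩ : Fact σ α) ∈ I → (⟨φ.rel, u⟩ : Fact σ α) ∈ I →
    (∀ i ∈ φ.lhs, t i = u i) → t φ.rhs = u φ.rhs

/-- A Boolean conjunctive query: existentially quantified variables `Fin nv` and a
conjunction (list) of constant-free atoms, in which every variable occurs. -/
structure CQ (σ : Sig) where
  nv : ℕ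
  atoms : List (Fact σ (Fin nv))
  vars_occur : ∀ x : Fin nv, ∃ A ∈ atoms, ∃ i, A.2 i = x

/-- The size of a CQ: its number of atoms. -/
def CQ.size (q : CQ σ) : ℕ := q.atoms.length

/-- A Boolean CQ holds in an instance iff there is a homomorphism (a match) from its
atoms to facts of the instance. -/
def satCQ (I : Inst σ α) (q : CQ σ) : Prop :=
  ∃ h : Fin q.nv → α, ∀ A ∈ q.atoms, (⟨A.1, fun i => h (A.2 i)⟩ : Fact σ α) ∈ I

/-- A Berge cycle of a CQ: `m + 2 ≥ 2` pairwise distinct atom occurrences and pairwise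
distinct variables, cyclically incident. -/
def HasBergeCycle (q : CQ σ) : Prop :=
  ∃ m : ℕ, ∃ A : Fin (m + 2) → Fin q.atoms.length, Function.Injective A ∧
    ∃ x : Fin (m + 2) → Fin q.nv, Function.Injective x ∧
      ∀ i : Fin (m + 2),
        (∃ a, (q.atoms.get (A i)).2 a = x i) ∧
        (∃ a, (q.atoms.get (A (i + 1))).2 a = x i)

/-- An acyclic CQ (ACQ): no Berge cycle and no variable occurring twice in one atom. -/
def IsACQ (q : CQ σ) : Prop :=
  ¬ HasBergeCycle q ∧ ∀ A ∈ q.atoms, Function.Injective A.2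

/-- An instance satisfies a set of UIDs and a set of FDs. -/
def satAllC (I : Inst σ ℕ) (Su : Set (UID σ)) (Sf : Set (FD σ)) : Prop :=
  (∀ τ ∈ Su, satUID I τ) ∧ (∀ φ ∈ Sf, satFD I φ)

/-- Unrestricted open-world entailment: every (finite or infinite) superinstance of `I₀`
satisfying the constraints satisfies `q`. -/
def unrEntails (I₀ : Inst σ ℕ) (Su : Set (UID σ)) (Sf : Set (FD σ)) (q : CQ σ) : Prop :=
  ∀ I : Inst σ ℕ, I₀ ⊆ I → satAllC I Su Sf → satCQ I q

/-- Finite open-world entailment: every finite superinstance of `I₀` satisfying the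
constraints satisfies `q`. -/
def finEntails (I₀ : Inst σ ℕ) (Su : Set (UID σ)) (Sf : Set (FD σ)) (q : CQ σ) : Prop :=
  ∀ I : Inst σ ℕ, I₀ ⊆ I → I.Finite → satAllC I Su Sf → satCQ I q

/-- A (nontrivial) UID is finitely implied by the constraints: it holds in every finite
instance satisfying them. -/
def finImpUID (Su : Set (UID σ)) (Sf : Set (FD σ)) (τ : UID σ) : Prop :=
  ∀ I : Inst σ ℕ, I.Finite → satAllC I Su Sf → satUID I τ

/-- A (nontrivial) FD is finitely implied by the constraints: it holds in every finite
instance satisfying them. -/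
def finImpFD (Su : Set (UID σ)) (Sf : Set (FD σ)) (φ : FD σ) : Prop :=
  ∀ I : Inst σ ℕ, I.Finite → satAllC I Su Sf → satFD I φ

/-- Fact labels: a fact together with one of its positions. -/
abbrev LabT (σ : Sig) : Type := Σ F : Fact σ ℕ, Fin (σ.ar F.1)

/-- The product of `I` by the group `G` preserving `I₀`: facts of `I₀` are copied
along each `g ∈ G` diagonally, facts of `I ∖ I₀` are copied with each element shifted
by the corresponding fact label; the function `emb` realizes the pairs `(a, g)` as
elements of the fixed countable domain. -/
def prodInst (I₀ I : Inst σ ℕ) {G : Type} [Group G]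
    (lab : LabT σ → G) (emb : ℕ → G → ℕ) : Inst σ ℕ :=
  {F' | ∃ (g : G) (F : Fact σ ℕ),
      (F ∈ I₀ ∧ F' = ⟨F.1, fun i => emb (F.2 i) g⟩) ∨
      (F ∈ I ∧ F ∉ I₀ ∧ F' = ⟨F.1, fun i => emb (F.2 i) (g * lab ⟨F, i⟩)⟩)}

/-- `I₀` is individualizing: each element `a` of its domain has a dedicated fresh
unary relation `P a` containing exactly the fact `P_a(a)` in `I₀`, and these
relations occur in no constraint. -/
def Individualizing (I₀ : Inst σ ℕ) (Su : Set (UID σ)) (Sf : Set (FD σ)) : Prop :=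
  ∃ P : ℕ → σ.Rel,
    (∀ a ∈ activeDom I₀, σ.ar (P a) = 1) ∧
    (∀ a ∈ activeDom I₀, ∀ b ∈ activeDom I₀, P a = P b → a = b) ∧
    (∀ a ∈ activeDom I₀, ∀ t : Fin (σ.ar (P a)) → ℕ,
        ((⟨P a, t⟩ : Fact σ ℕ) ∈ I₀ ↔ t = fun _ => a)) ∧
    (∀ a ∈ activeDom I₀, ∀ τ ∈ Su, τ.src.1 ≠ P a ∧ τ.dst.1 ≠ P a) ∧
    (∀ a ∈ activeDom I₀, ∀ φ ∈ Sf, φ.rel ≠ P a)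

/-!
Match a query with `k` atoms in the product. The facts it uses are diagonal copies of facts of
`I₀`, together with at most `k` shifted copies of facts of `I ∖ I₀`. Read the shifted copies as
atoms over their own elements, except that every occurrence of an element `a` of `I₀` becomes a
fresh variable constrained by `P_a`. This query has at most `k * (w + 1)` atoms and matches in `I`.
A Berge cycle in it would spell a nonempty reduced word of length at most `2 * k` in the labels with
product `1`, so the girth makes it acyclic, hence entailed. In a model of the constraints containing
`I₀` we may discard all `P_a`-facts outside `I₀`, so a match of the acyclic query sends each fresh
variable back to its element `a`, and therefore glues with the identity on the elements of `I₀` to a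
match of the original query.
-/

/-- The image of a fact under a map of elements (equivalently, of variables). -/
def Fact.map (f : α → β) (A : Fact σ α) : Fact σ β := ⟨A.1, fun i => f (A.2 i)⟩

theorem satCQ.mono {I J : Inst σ α} {q : CQ σ} (hIJ : I ⊆ J) (hq : satCQ I q) : satCQ J q :=
  hq.imp fun _ hh A hA => hIJ (hh A hA)

theorem satCQ.map {I : Inst σ α} {J : Inst σ β} {q : CQ σ} (hq : satCQ I q) (H : α → β)
    (hH : ∀ F ∈ I, F.map H ∈ J) : satCQ J q :=
  hq.elim fun h hh => ⟨H ∘ h, fun A hA => hH _ (hh A hA)⟩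

theorem exists_finset_subset_of_forall_mem_union_image {X Y : Type*} {D : Set Y} {f : X → Y}
    {T : Set X} (l : List Y) (hl : ∀ y ∈ l, y ∈ D ∪ f '' T) :
    ∃ S : Finset X, ↑S ⊆ T ∧ S.card ≤ l.length ∧ ∀ y ∈ l, y ∈ D ∪ f '' S := by
  classical
  induction l with
  | nil => exact ⟨∅, by simp⟩
  | cons y l ih =>
    obtain ⟨hy, hl⟩ := List.forall_mem_cons.1 hl
    obtain ⟨S, hST, hcard, hS⟩ := ih hl
    rcases hy with hyD | ⟨c, hcT, rfl⟩
    · exact ⟨S, hST, hcard.trans (Nat.le_succ _), List.forall_mem_cons.2 ⟨Or.inl hyD, hS⟩⟩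
    · refine ⟨insert c S, ?_, (Finset.card_insert_le c S).trans (Nat.succ_le_succ hcard), ?_⟩
      · simpa [Set.insert_subset_iff] using ⟨hcT, hST⟩
      · have hsub : (S : Set X) ⊆ ↑(insert c S) := by simp
        exact List.forall_mem_cons.2 ⟨Or.inr ⟨c, by simp, rfl⟩,
          fun y hy => Set.union_subset_union_right D (Set.image_mono hsub) (hS y hy)⟩

theorem satCQ.exists_finset_of_union_image {X : Type*} {D : Inst σ α} {f : X → Fact σ α}
    {T : Set X} {q : CQ σ} (hq : satCQ (D ∪ f '' T) q) :
    ∃ S : Finset X, ↑S ⊆ T ∧ S.card ≤ q.size ∧ satCQ (D ∪ f '' S) q := by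
  obtain ⟨h, hh⟩ := hq
  obtain ⟨S, hST, hcard, hS⟩ := exists_finset_subset_of_forall_mem_union_image
    (q.atoms.map (Fact.map h)) (List.forall_mem_map.2 hh)
  exact ⟨S, hST, by simpa [CQ.size] using hcard, h, List.forall_mem_map.1 hS⟩

section AtomFamilies

variable {ι κ V : Type} {B : ι → Fact σ V} {q : CQ σ}

/-- A Berge cycle of length `m + 2` in a family of atoms over an arbitrary type of variables,
generalizing `HasBergeCycle` from the atoms of a query. -/
structure BergeCycle (B : ι → Fact σ V) (m : ℕ) where
  atom : Fin (m + 2) → ι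
  var : Fin (m + 2) → V
  atom_injective : Function.Injective atom
  var_injective : Function.Injective var
  var_mem : ∀ i, var i ∈ Set.range (B (atom i)).2
  var_mem_succ : ∀ i, var i ∈ Set.range (B (atom (i + 1))).2

namespace BergeCycle

variable {m : ℕ}

theorem length_le_card [Finite ι] (C : BergeCycle B m) : m + 2 ≤ Nat.card ι := by
  simpa using Nat.card_le_card_of_injective C.atom C.atom_injective

theorem atom_ne_atom_succ (C : BergeCycle B m) (i : Fin (m + 2)) : C.atom i ≠ C.atom (i + 1) :=
  C.atom_injective.ne (by simp)

theorem var_ne_var_succ (C : BergeCycle B m) (i : Fin (m + 2)) : C.var i ≠ C.var (i + 1) :=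
  C.var_injective.ne (by simp)

theorem not_subsingleton_range_atom (C : BergeCycle B m) (i : Fin (m + 2)) :
    ¬ (Set.range (B (C.atom i)).2).Subsingleton := fun hsub => by
  have hprev := C.var_mem_succ (i - 1)
  have hne := C.var_ne_var_succ (i - 1)
  rw [sub_add_cancel] at hprev hne
  exact hne (hsub hprev (C.var_mem i))

theorem nonempty_comp (C : BergeCycle B m) (f : κ → ι)
    (hf : ∀ j ∉ Set.range f, (Set.range (B j).2).Subsingleton) :
    Nonempty (BergeCycle (B ∘ f) m) := by
  have hrange : ∀ i, C.atom i ∈ Set.range f := fun i =>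
    not_imp_comm.1 (hf _) (C.not_subsingleton_range_atom i)
  choose c hc using hrange
  exact ⟨{
    atom := c
    var := C.var
    atom_injective := fun i j hij => C.atom_injective (by rw [← hc i, ← hc j, hij])
    var_injective := C.var_injective
    var_mem := fun i => by rw [Function.comp_apply, hc]; exact C.var_mem i
    var_mem_succ := fun i => by rw [Function.comp_apply, hc]; exact C.var_mem_succ i }⟩

end BergeCycle

/-- A presentation of the query `q` by a family `B` of atoms over an arbitrary type of variables:
up to reindexing of the atoms and injective renaming of the variables, `q` is `B`. -/
structure CQPresentation (q : CQ σ) (B : ι → Fact σ V) where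
  index : Fin q.atoms.length ≃ ι
  rename : Fin q.nv → V
  rename_injective : Function.Injective rename
  map_rename : ∀ j, (q.atoms.get j).map rename = B (index j)

theorem exists_cqPresentation [Finite ι] (B : ι → Fact σ V) :
    ∃ q : CQ σ, Nonempty (CQPresentation q B) := by
  have : Finite (⋃ j, Set.range (B j).2) :=
    (Set.finite_iUnion fun _ => Set.finite_range _).to_subtype
  obtain ⟨n, ⟨e⟩⟩ := Finite.exists_equiv_fin (⋃ j, Set.range (B j).2)
  obtain ⟨N, ⟨d⟩⟩ := Finite.exists_equiv_fin ι
  have hmem (j : ι) (i) : (B j).2 i ∈ ⋃ j, Set.range (B j).2 := Set.mem_iUnion.2 ⟨j, i, rfl⟩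
  let atom (j : ι) : Fact σ (Fin n) := ⟨(B j).1, fun i => e ⟨(B j).2 i, hmem j i⟩⟩
  have hatom (j : ι) : (atom j).map (fun x => (e.symm x : V)) = B j := by simp [atom, Fact.map]
  refine ⟨⟨n, List.ofFn (atom ∘ d.symm), fun x => ?_⟩, ⟨{
    index := (finCongr List.length_ofFn).trans d.symm
    rename := fun x => e.symm x
    rename_injective := Subtype.val_injective.comp e.symm.injective
    map_rename := fun j => by rw [List.get_ofFn]; exact hatom _ }⟩⟩
  obtain ⟨j, i, hi⟩ := Set.mem_iUnion.1 (e.symm x).2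
  exact ⟨atom j, List.mem_ofFn.2 ⟨d j, by simp⟩, i, by simp [atom, hi]⟩

namespace CQPresentation

theorem size_eq (p : CQPresentation q B) : q.size = Nat.card ι := by
  rw [← Nat.card_congr p.index, Nat.card_fin, CQ.size]

theorem satCQ_iff [Nonempty α] (p : CQPresentation q B) (I : Inst σ α) :
    satCQ I q ↔ ∃ f : V → α, ∀ j, (B j).map f ∈ I := by
  constructor
  · rintro ⟨h, hh⟩
    refine ⟨Function.extend p.rename h fun _ => Classical.arbitrary α, fun j => ?_⟩
    obtain ⟨j, rfl⟩ := p.index.surjective j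
    rw [← p.map_rename]
    simpa only [Fact.map, p.rename_injective.extend_apply] using hh _ (List.get_mem q.atoms j)
  · rintro ⟨f, hf⟩
    refine ⟨f ∘ p.rename, fun A hA => ?_⟩
    obtain ⟨j, rfl⟩ := List.get_of_mem hA
    have hj := hf (p.index j)
    rwa [← p.map_rename] at hj

theorem rename_mem_range (p : CQPresentation q B) {j : Fin q.atoms.length} {x : Fin q.nv}
    (hx : x ∈ Set.range (q.atoms.get j).2) : p.rename x ∈ Set.range (B (p.index j)).2 := by
  obtain ⟨i, rfl⟩ := hx
  rw [← p.map_rename]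
  exact ⟨i, rfl⟩

theorem isACQ (p : CQPresentation q B) (hcycle : ∀ m, IsEmpty (BergeCycle B m))
    (hinj : ∀ j, Function.Injective (B j).2) : IsACQ q := by
  constructor
  · rintro ⟨m, A, hA, x, hx, hAx⟩
    exact (hcycle m).false {
      atom := p.index ∘ A
      var := p.rename ∘ x
      atom_injective := p.index.injective.comp hA
      var_injective := p.rename_injective.comp hx
      var_mem := fun i => p.rename_mem_range (hAx i).1
      var_mem_succ := fun i => p.rename_mem_range (hAx i).2 }
  · intro A hA
    obtain ⟨j, rfl⟩ := List.get_of_mem hA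
    have hj := hinj (p.index j)
    rw [← p.map_rename] at hj
    exact Function.Injective.of_comp (f := p.rename) hj

end CQPresentation

end AtomFamilies

section Girth

variable {G : Type*} [Group G] {L : Set G}

/-- The girth of `G` under `L` exceeds `n`: no nonempty reduced word of length at most `n` over
`L ∪ L⁻¹` has product `1`. Words are lists of group elements. -/
def GirthGT (L : Set G) (n : ℕ) : Prop :=
  ∀ l : List G, l ≠ [] → l.length ≤ n → (∀ g ∈ l, g ∈ L ∨ g⁻¹ ∈ L) →
    l.IsChain (fun g h => h ≠ g⁻¹) → l.prod ≠ 1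

/-- The word `a₀ b₀⁻¹ a₁ b₁⁻¹ ⋯ aₙ₋₁ bₙ₋₁⁻¹`. -/
def alternatingWord (a b : ℕ → G) (n : ℕ) : List G :=
  (List.range n).flatMap fun i => [a i, (b i)⁻¹]

theorem length_alternatingWord (a b : ℕ → G) (n : ℕ) : (alternatingWord a b n).length = 2 * n := by
  simp [alternatingWord, List.length_flatMap, mul_comm]

theorem mul_prod_alternatingWord {γ a b : ℕ → G} (hstep : ∀ i, γ i * a i = γ (i + 1) * b i)
    (n : ℕ) : γ 0 * (alternatingWord a b n).prod = γ n := by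
  induction n with
  | zero => simp [alternatingWord]
  | succ n ih =>
    have hsucc : alternatingWord a b (n + 1) = alternatingWord a b n ++ [a n, (b n)⁻¹] := by
      simp [alternatingWord, List.range_succ]
    rw [hsucc, List.prod_append, ← mul_assoc, ih, List.prod_pair, ← mul_assoc, hstep,
      mul_inv_cancel_right]

theorem isChain_alternatingWord {a b : ℕ → G} (hab : ∀ i, a i ≠ b i) (hba : ∀ i, b i ≠ a (i + 1))
    (n : ℕ) : (alternatingWord a b n).IsChain (fun g h => h ≠ g⁻¹) := by
  rw [alternatingWord, List.flatMap_def, List.isChain_flatten (by simp)]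
  constructor
  · simpa using fun i _ => (hab i).symm
  · exact (List.isChain_map _).2 ((List.isChain_range _ n).2 fun i _ => by
      simpa using (hba i).symm)

open scoped Fin.NatCast in
theorem GirthGT.lt_of_cyclic_walk {N n : ℕ} [NeZero n] (hL : GirthGT L N) {γ a b : Fin n → G}
    (ha : ∀ i, a i ∈ L) (hb : ∀ i, b i ∈ L) (hstep : ∀ i, γ i * a i = γ (i + 1) * b i)
    (hab : ∀ i, a i ≠ b i) (hba : ∀ i, b i ≠ a (i + 1)) : N < 2 * n := by
  by_contra! hN
  let word := alternatingWord (fun j => a j) (fun j => b j) n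
  have hlength : word.length = 2 * n := length_alternatingWord _ _ n
  have hclosed : γ 0 * word.prod = γ 0 := by
    simpa using mul_prod_alternatingWord (γ := fun j : ℕ => γ j) (fun j => by simpa using hstep j) n
  refine hL word ?_ (hlength.trans_le hN) ?_ ?_ (mul_eq_left.1 hclosed)
  · exact List.ne_nil_of_length_pos (by have := NeZero.pos n; omega)
  · intro g hg
    obtain ⟨j, -, hj⟩ := List.mem_flatMap.1 hg
    rcases List.mem_pair.1 hj with rfl | rfl
    · exact Or.inl (ha _)
    · exact Or.inr ((inv_inv (b j)).symm ▸ hb _)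
  · exact isChain_alternatingWord (fun j => hab j) (fun j => by simpa using hba j) n

end Girth

/-- The fact labels `Λ(I)`: the positions of the facts of `I` outside `I₀`. -/
def factLabels (I₀ I : Inst σ ℕ) : Set (LabT σ) := {x | x.1 ∈ I \ I₀}

section Product

variable {I₀ I : Inst σ ℕ} {G : Type}

/-- The copies `F × g` of the facts `F` of `I₀` in the product. -/
def diagonalCopies (I₀ : Inst σ ℕ) (emb : ℕ → G → ℕ) : Inst σ ℕ :=
  {F' | ∃ g : G, ∃ F ∈ I₀, F' = F.map (emb · g)}

variable [Group G] {lab : LabT σ → G} {emb : ℕ → G → ℕ}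

theorem girthGT_of_forall_fin_word {n : ℕ}
    (h : ∀ (m : ℕ) (wd : Fin m → G), 0 < m → m ≤ n →
      (∀ i, ∃ x : LabT σ, x.1 ∈ I ∧ x.1 ∉ I₀ ∧ (wd i = lab x ∨ wd i = (lab x)⁻¹)) →
      (∀ (i : ℕ) (hi : i + 1 < m), wd ⟨i + 1, hi⟩ ≠ (wd ⟨i, Nat.lt_of_succ_lt hi⟩)⁻¹) →
      (List.ofFn wd).prod ≠ 1) :
    GirthGT (lab '' factLabels I₀ I) n := by
  intro l hne hlen hmem hchain
  have hletter (i : Fin l.length) :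
      ∃ x : LabT σ, x.1 ∈ I ∧ x.1 ∉ I₀ ∧ (l.get i = lab x ∨ l.get i = (lab x)⁻¹) := by
    rcases hmem _ (l.get_mem i) with ⟨x, hx, hlab⟩ | ⟨x, hx, hlab⟩
    · exact ⟨x, hx.1, hx.2, Or.inl hlab.symm⟩
    · exact ⟨x, hx.1, hx.2, Or.inr (inv_eq_iff_eq_inv.1 hlab.symm)⟩
  have hprod := h l.length l.get (List.length_pos_iff.2 hne) hlen hletter
    (List.isChain_iff_getElem.1 hchain)
  rwa [List.ofFn_get] at hprod

/-- The copy at `g` of the fact `F`, with its elements shifted by the labels of `F`, where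
`c = (g, F)`. -/
def shiftedCopy (lab : LabT σ → G) (emb : ℕ → G → ℕ) (c : G × Fact σ ℕ) : Fact σ ℕ :=
  ⟨c.2.1, fun i => emb (c.2.2 i) (c.1 * lab ⟨c.2, i⟩)⟩

theorem prodInst_eq_union : prodInst I₀ I lab emb =
    diagonalCopies I₀ emb ∪ shiftedCopy lab emb '' {c | c.2 ∈ I \ I₀} := by
  ext F'
  constructor
  · rintro ⟨g, F, ⟨hF, rfl⟩ | ⟨hF, hF₀, rfl⟩⟩
    · exact Or.inl ⟨g, F, hF, rfl⟩
    · exact Or.inr ⟨(g, F), ⟨hF, hF₀⟩, rfl⟩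
  · rintro (⟨g, F, hF, rfl⟩ | ⟨⟨g, F⟩, ⟨hF, hF₀⟩, rfl⟩)
    · exact ⟨g, F, Or.inl ⟨hF, rfl⟩⟩
    · exact ⟨g, F, Or.inr ⟨hF, hF₀, rfl⟩⟩

theorem subset_prodInst (hemb : ∀ a ∈ activeDom I₀, emb a 1 = a) :
    I₀ ⊆ prodInst I₀ I lab emb := fun F hF =>
  ⟨1, F, Or.inl ⟨hF, Sigma.ext rfl (heq_of_eq (funext fun i => (hemb _ ⟨F, hF, i, rfl⟩).symm))⟩⟩

end Product

section Unfolding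

variable {I₀ I J : Inst σ ℕ} {G : Type} {S : Finset (G × Fact σ ℕ)} {w : ℕ}

/-- The variables of the acyclic query read off a set of shifted copies. Elements `(a, g)` of the
product with `a` outside `I₀` are `shared` between copies, while each occurrence of an element
of `I₀`, at the label `x` of a copy at `g`, is a variable `occurrence g x` of its own. -/
inductive UnfoldingVar (σ : Sig) (G : Type) where
  | shared (a : ℕ) (g : G)
  | occurrence (g : G) (x : LabT σ)

/-- The element of `I` that a variable stands for. -/
def UnfoldingVar.elem : UnfoldingVar σ G → ℕ
  | shared a _ => a
  | occurrence _ x => x.1.2 x.2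

/-- The index type of the atoms of `unfolding`: one per copy, and one per occurrence in a copy of
an element of `I₀`. -/
abbrev UnfoldingIndex (I₀ : Inst σ ℕ) (S : Finset (G × Fact σ ℕ)) : Type :=
  Σ c : S, Option {i // c.1.2.2 i ∈ activeDom I₀}

theorem card_unfoldingIndex_le (hw : ∀ R, σ.ar R ≤ w) :
    Nat.card (UnfoldingIndex I₀ S) ≤ S.card * (w + 1) := by
  have hcopy (c : S) : Nat.card (Option {i // c.1.2.2 i ∈ activeDom I₀}) ≤ w + 1 := by
    rw [Finite.card_option]
    have hsub := Finite.card_subtype_le fun i => c.1.2.2 i ∈ activeDom I₀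
    rw [Nat.card_fin] at hsub
    exact Nat.succ_le_succ (hsub.trans (hw _))
  calc Nat.card (UnfoldingIndex I₀ S)
      = ∑ c : S, Nat.card (Option {i // c.1.2.2 i ∈ activeDom I₀}) := Nat.card_sigma
    _ ≤ ∑ _c : S, (w + 1) := Finset.sum_le_sum fun c _ => hcopy c
    _ = S.card * (w + 1) := by simp

open Classical in
/-- The candidate image of the element `(a, g)` of the product under a map `f` of variables:
elements of `I₀` stay in place. -/
noncomputable def glue (I₀ : Inst σ ℕ) (f : UnfoldingVar σ G → ℕ) (a : ℕ) (g : G) : ℕ :=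
  if a ∈ activeDom I₀ then a else f (.shared a g)

variable [Group G] {lab : LabT σ → G} {emb : ℕ → G → ℕ} {P : ℕ → σ.Rel} {k : ℕ}

open Classical in
/-- The variable at the label `x` of a copy at `g`. -/
noncomputable def copyVar (I₀ : Inst σ ℕ) (lab : LabT σ → G) (g : G) (x : LabT σ) :
    UnfoldingVar σ G :=
  if x.1.2 x.2 ∈ activeDom I₀ then .occurrence g x else .shared (x.1.2 x.2) (g * lab x)

theorem elem_copyVar (g : G) (x : LabT σ) : (copyVar I₀ lab g x).elem = x.1.2 x.2 := by
  unfold copyVar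
  split_ifs <;> rfl

theorem mul_lab_eq_of_copyVar_eq {g h : G} {x y : LabT σ}
    (heq : copyVar I₀ lab g x = copyVar I₀ lab h y) : g * lab x = h * lab y := by
  unfold copyVar at heq
  split_ifs at heq <;> simp_all

/-- The atom of the unfolding for the copy of `F` at `g`, where `c = (g, F)`. -/
noncomputable def copyAtom (I₀ : Inst σ ℕ) (lab : LabT σ → G) (c : G × Fact σ ℕ) :
    Fact σ (UnfoldingVar σ G) :=
  ⟨c.2.1, fun i => copyVar I₀ lab c.1 ⟨c.2, i⟩⟩

/-- The query read off the copies in `S`: the atom of each copy, and an atom `P_a` on each variable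
standing for an occurrence of an element `a` of `I₀`. -/
noncomputable def unfolding (I₀ : Inst σ ℕ) (lab : LabT σ → G) (P : ℕ → σ.Rel)
    (S : Finset (G × Fact σ ℕ)) : UnfoldingIndex I₀ S → Fact σ (UnfoldingVar σ G)
  | ⟨c, none⟩ => copyAtom I₀ lab c
  | ⟨c, some i⟩ => ⟨P (c.1.2.2 i), fun _ => copyVar I₀ lab c.1.1 ⟨c.1.2, i⟩⟩

theorem copyAtom_snd_injective (hinj : (factLabels I₀ I).InjOn lab) {c : G × Fact σ ℕ}
    (hc : c.2 ∈ I \ I₀) : Function.Injective (copyAtom I₀ lab c).2 := fun i j hij => by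
  have hlab : lab ⟨c.2, i⟩ = lab ⟨c.2, j⟩ := mul_left_cancel (mul_lab_eq_of_copyVar_eq hij)
  exact sigma_mk_injective (i := c.2) (hinj hc hc hlab)

theorem unfolding_snd_injective (hinj : (factLabels I₀ I).InjOn lab) (hS : ∀ c ∈ S, c.2 ∈ I \ I₀)
    (hP : ∀ a ∈ activeDom I₀, σ.ar (P a) = 1) :
    ∀ j, Function.Injective (unfolding I₀ lab P S j).2
  | ⟨c, none⟩ => copyAtom_snd_injective hinj (hS c c.2)
  | ⟨_, some i⟩ =>
    have : Subsingleton (Fin (σ.ar (P _))) := Fin.subsingleton_iff_le_one.2 (hP _ i.2).le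
    fun s t _ => this.elim s t

theorem isEmpty_bergeCycle_copyAtom (hinj : (factLabels I₀ I).InjOn lab)
    (hgirth : GirthGT (lab '' factLabels I₀ I) (2 * k)) (hS : ∀ c ∈ S, c.2 ∈ I \ I₀)
    (hcard : S.card ≤ k) (m : ℕ) :
    IsEmpty (BergeCycle (fun c : S => copyAtom I₀ lab c) m) := by
  refine ⟨fun C => ?_⟩
  choose p hp using C.var_mem
  choose r hr using C.var_mem_succ
  let γ (i : Fin (m + 2)) : G := (C.atom i).1.1
  let x (i : Fin (m + 2)) : LabT σ := ⟨(C.atom i).1.2, p i⟩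
  let y (i : Fin (m + 2)) : LabT σ := ⟨(C.atom (i + 1)).1.2, r i⟩
  have hx (i) : x i ∈ factLabels I₀ I := hS _ (C.atom i).2
  have hy (i) : y i ∈ factLabels I₀ I := hS _ (C.atom (i + 1)).2
  have hstep (i) : γ i * lab (x i) = γ (i + 1) * lab (y i) :=
    mul_lab_eq_of_copyVar_eq ((hp i).trans (hr i).symm)
  have hxy (i) : lab (x i) ≠ lab (y i) := fun hlab => by
    have hγ : γ i = γ (i + 1) := mul_right_cancel (hlab ▸ hstep i)
    have hfact : (x i).1 = (y i).1 := congrArg Sigma.fst (hinj (hx i) (hy i) hlab)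
    exact C.atom_ne_atom_succ i (Subtype.ext (Prod.ext hγ hfact))
  have hyx (i) : lab (y i) ≠ lab (x (i + 1)) := fun hlab => by
    have hlabel : y i = x (i + 1) := hinj (hy i) (hx (i + 1)) hlab
    refine C.var_ne_var_succ i ?_
    calc C.var i = copyVar I₀ lab (γ (i + 1)) (y i) := (hr i).symm
      _ = copyVar I₀ lab (γ (i + 1)) (x (i + 1)) := by rw [hlabel]
      _ = C.var (i + 1) := hp (i + 1)
  have hlong : 2 * k < 2 * (m + 2) := hgirth.lt_of_cyclic_walk
    (fun i => Set.mem_image_of_mem lab (hx i)) (fun i => Set.mem_image_of_mem lab (hy i))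
    hstep hxy hyx
  have hshort : m + 2 ≤ S.card := by simpa using C.length_le_card
  omega

theorem isEmpty_bergeCycle_unfolding (hinj : (factLabels I₀ I).InjOn lab)
    (hgirth : GirthGT (lab '' factLabels I₀ I) (2 * k)) (hS : ∀ c ∈ S, c.2 ∈ I \ I₀)
    (hcard : S.card ≤ k) (m : ℕ) : IsEmpty (BergeCycle (unfolding I₀ lab P S) m) := by
  refine ⟨fun C => ?_⟩
  obtain ⟨C'⟩ := C.nonempty_comp (fun c : S => ⟨c, none⟩) fun
    | ⟨c, none⟩, hc => absurd ⟨c, rfl⟩ hc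
    | ⟨_, some _⟩, _ => Set.subsingleton_of_forall_eq _ (Set.forall_mem_range.2 fun _ => rfl)
  exact (isEmpty_bergeCycle_copyAtom hinj hgirth hS hcard m).false C'

theorem unfolding_map_elem_mem (hsub : I₀ ⊆ I) (hS : ∀ c ∈ S, c.2 ∈ I \ I₀)
    (hP : ∀ a ∈ activeDom I₀, (⟨P a, fun _ => a⟩ : Fact σ ℕ) ∈ I₀) :
    ∀ j, (unfolding I₀ lab P S j).map UnfoldingVar.elem ∈ I
  | ⟨c, none⟩ => by simpa only [unfolding, copyAtom, Fact.map, elem_copyVar] using (hS c c.2).1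
  | ⟨_, some i⟩ => by simpa only [unfolding, Fact.map, elem_copyVar] using hsub (hP _ i.2)

theorem exists_isACQ_presenting_unfolding (hsub : I₀ ⊆ I) (hw : ∀ R, σ.ar R ≤ w)
    (hinj : (factLabels I₀ I).InjOn lab) (hgirth : GirthGT (lab '' factLabels I₀ I) (2 * k))
    (hS : ∀ c ∈ S, c.2 ∈ I \ I₀) (hcard : S.card ≤ k)
    (hPar : ∀ a ∈ activeDom I₀, σ.ar (P a) = 1)
    (hPmem : ∀ a ∈ activeDom I₀, (⟨P a, fun _ => a⟩ : Fact σ ℕ) ∈ I₀) :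
    ∃ q : CQ σ, Nonempty (CQPresentation q (unfolding I₀ lab P S)) ∧ IsACQ q ∧
      q.size ≤ k * (w + 1) ∧ satCQ I q := by
  obtain ⟨q, ⟨p⟩⟩ := exists_cqPresentation (unfolding I₀ lab P S)
  refine ⟨q, ⟨p⟩, p.isACQ (isEmpty_bergeCycle_unfolding hinj hgirth hS hcard)
    (unfolding_snd_injective hinj hS hPar), ?_,
    (p.satCQ_iff I).2 ⟨_, unfolding_map_elem_mem hsub hS hPmem⟩⟩
  rw [p.size_eq]
  exact (card_unfoldingIndex_le hw).trans (Nat.mul_le_mul_right _ hcard)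

theorem apply_copyVar_eq_glue {f : UnfoldingVar σ G → ℕ}
    (hf : ∀ j, (unfolding I₀ lab P S j).map f ∈ J)
    (hP : ∀ a ∈ activeDom I₀, ∀ t, (⟨P a, t⟩ : Fact σ ℕ) ∈ J → t = fun _ => a)
    {c : G × Fact σ ℕ} (hc : c ∈ S) (i : Fin (σ.ar c.2.1)) :
    f (copyVar I₀ lab c.1 ⟨c.2, i⟩) = glue I₀ f (c.2.2 i) (c.1 * lab ⟨c.2, i⟩) := by
  by_cases hi : c.2.2 i ∈ activeDom I₀
  · have hPc := hP _ hi _ (hf ⟨⟨c, hc⟩, some ⟨i, hi⟩⟩)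
    exact (congrFun hPc ⟨0, σ.ar_pos _⟩).trans (if_pos hi).symm
  · rw [glue, copyVar, if_neg hi, if_neg hi]

theorem exists_hom_of_unfolding_match
    (hemb : Function.Injective fun ag : ℕ × G => emb ag.1 ag.2) (hJ : I₀ ⊆ J)
    (hP : ∀ a ∈ activeDom I₀, ∀ t, (⟨P a, t⟩ : Fact σ ℕ) ∈ J → t = fun _ => a)
    {f : UnfoldingVar σ G → ℕ} (hf : ∀ j, (unfolding I₀ lab P S j).map f ∈ J) :
    ∃ H : ℕ → ℕ, ∀ F ∈ diagonalCopies I₀ emb ∪ shiftedCopy lab emb '' S, F.map H ∈ J := by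
  let H := Function.extend (fun ag : ℕ × G => emb ag.1 ag.2) (fun ag => glue I₀ f ag.1 ag.2) id
  have hH (a : ℕ) (g : G) : H (emb a g) = glue I₀ f a g := hemb.extend_apply _ _ (a, g)
  refine ⟨H, ?_⟩
  rintro _ (⟨g, F, hF, rfl⟩ | ⟨c, hc, rfl⟩)
  · have hfix (i) : glue I₀ f (F.2 i) g = F.2 i := if_pos ⟨F, hF, i, rfl⟩
    simpa only [Fact.map, hH, hfix] using hJ hF
  · simpa only [Fact.map, shiftedCopy, hH, unfolding, copyAtom, apply_copyVar_eq_glue hf hP hc]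
      using hf ⟨⟨c, hc⟩, none⟩

end Unfolding

theorem exists_subset_satAllC_forall_individualizer_eq {I₀ J : Inst σ ℕ} {Su : Set (UID σ)}
    {Sf : Set (FD σ)} {P : ℕ → σ.Rel}
    (hPiff : ∀ a ∈ activeDom I₀, ∀ t, (⟨P a, t⟩ : Fact σ ℕ) ∈ I₀ ↔ t = fun _ => a)
    (hPdst : ∀ a ∈ activeDom I₀, ∀ τ ∈ Su, τ.dst.1 ≠ P a)
    (hJ₀ : I₀ ⊆ J) (hJ : satAllC J Su Sf) :
    ∃ J' ⊆ J, I₀ ⊆ J' ∧ satAllC J' Su Sf ∧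
      ∀ a ∈ activeDom I₀, ∀ t, (⟨P a, t⟩ : Fact σ ℕ) ∈ J' → t = fun _ => a := by
  refine ⟨{F ∈ J | ∀ a ∈ activeDom I₀, F.1 = P a → F ∈ I₀}, Set.sep_subset _ _,
    fun F hF => ⟨hJ₀ hF, fun _ _ _ => hF⟩, ⟨?_, ?_⟩,
    fun a ha t ht => (hPiff a ha t).1 (ht.2 a ha rfl)⟩
  · rintro τ hτ a ⟨t, ht, hta⟩
    obtain ⟨u, hu, hua⟩ := hJ.1 τ hτ a ⟨t, ht.1, hta⟩
    exact ⟨u, ⟨hu, fun b hb hdst => absurd hdst (hPdst b hb τ hτ)⟩, hua⟩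
  · exact fun φ hφ t u ht hu => hJ.2 φ hφ t u ht.1 hu.1

theorem simple_product_general (Su : Set (UID σ)) (Sf : Set (FD σ)) (I₀ I : Inst σ ℕ)
    (hsub : I₀ ⊆ I) (hind : Individualizing I₀ Su Sf) (k w : ℕ) (hw : ∀ R, σ.ar R ≤ w)
    (G : Type) [Group G] (lab : LabT σ → G) (hinj : (factLabels I₀ I).InjOn lab)
    (hgirth : GirthGT (lab '' factLabels I₀ I) (2 * k))
    (hsound : ∀ q : CQ σ, IsACQ q → q.size ≤ k * (w + 1) → satCQ I q → unrEntails I₀ Su Sf q)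
    (emb : ℕ → G → ℕ) (hembinj : Function.Injective (fun ag : ℕ × G => emb ag.1 ag.2))
    (hembbase : ∀ a ∈ activeDom I₀, emb a 1 = a) :
    I₀ ⊆ prodInst I₀ I lab emb ∧
    ∀ q : CQ σ, q.size ≤ k → satCQ (prodInst I₀ I lab emb) q → unrEntails I₀ Su Sf q := by
  refine ⟨subset_prodInst hembbase, fun q hqk hq J hJ₀ hJ => ?_⟩
  obtain ⟨P, hPar, -, hPiff, hPuid, -⟩ := hind
  rw [prodInst_eq_union] at hq
  obtain ⟨S, hS, hcard, hqS⟩ := hq.exists_finset_of_union_image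
  obtain ⟨q', ⟨p⟩, hacq, hsize, hsat⟩ := exists_isACQ_presenting_unfolding hsub hw hinj hgirth hS
    (hcard.trans hqk) hPar fun a ha => (hPiff a ha _).2 rfl
  obtain ⟨J', hJ'J, hJ'₀, hJ', hPJ'⟩ := exists_subset_satAllC_forall_individualizer_eq hPiff
    (fun a ha τ hτ => (hPuid a ha τ hτ).2) hJ₀ hJ
  obtain ⟨f, hf⟩ := (p.satCQ_iff J').1 (hsound q' hacq hsize hsat J' hJ'₀ hJ')
  obtain ⟨H, hH⟩ := exists_hom_of_unfolding_match hembinj hJ'₀ hPJ' hf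
  exact (hqS.map H hH).mono hJ'J

/-- **Simple Product Lemma.** Let `Su ∪ Sf` be finitely closed UIDs and FDs, `I₀` a
finite individualizing instance, `I` a finite superinstance of `I₀`, and `G` a finite
group generated by the fact labels of `I` with girth at least `2k + 1` under them
(the labels embed injectively into `G`). If `I` is `(k·(w+1))`-sound for ACQs, `I₀`,
and the constraints, where `w` is the maximal arity of the signature, then the
product of `I` by `G` preserving `I₀` (realized in the fixed countable domain by any
injection `emb` identifying `(a, 1)` with `a` for `a ∈ dom(I₀)`) is a superinstance
of `I₀` which is `k`-sound for all Boolean CQs, `I₀`, and the constraints. -/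
theorem simple_product
    {σ : Sig} (Su : Set (UID σ)) (Sf : Set (FD σ))
    (hclU : ∀ τ : UID σ, finImpUID Su Sf τ → τ ∈ Su)
    (hclF : ∀ φ : FD σ, finImpFD Su Sf φ → φ ∈ Sf)
    (I₀ I : Inst σ ℕ) (hI₀fin : I₀.Finite) (hIfin : I.Finite) (hsub : I₀ ⊆ I)
    (hind : Individualizing I₀ Su Sf)
    (k w : ℕ) (hw : IsGreatest (Set.range σ.ar) w)
    (G : Type) [Group G] [Finite G]
    (lab : LabT σ → G)
    (hinj : ∀ x y : LabT σ, x.1 ∈ I → x.1 ∉ I₀ → y.1 ∈ I → y.1 ∉ I₀ →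
        lab x = lab y → x = y)
    (hgen : Subgroup.closure {g : G | ∃ x : LabT σ, x.1 ∈ I ∧ x.1 ∉ I₀ ∧ g = lab x} = ⊤)
    (hgirth : ∀ (m : ℕ) (wd : Fin m → G), 0 < m → m ≤ 2 * k →
        (∀ i, ∃ x : LabT σ, x.1 ∈ I ∧ x.1 ∉ I₀ ∧ (wd i = lab x ∨ wd i = (lab x)⁻¹)) →
        (∀ (i : ℕ) (hi : i + 1 < m),
            wd ⟨i + 1, hi⟩ ≠ (wd ⟨i, Nat.lt_of_succ_lt hi⟩)⁻¹) →
        (List.ofFn wd).prod ≠ 1)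
    (hsound : ∀ q : CQ σ, IsACQ q → q.size ≤ k * (w + 1) → satCQ I q →
        unrEntails I₀ Su Sf q)
    (emb : ℕ → G → ℕ)
    (hembinj : Function.Injective (fun ag : ℕ × G => emb ag.1 ag.2))
    (hembbase : ∀ a ∈ activeDom I₀, emb a 1 = a) :
    I₀ ⊆ prodInst I₀ I lab emb ∧
    ∀ q : CQ σ, q.size ≤ k → satCQ (prodInst I₀ I lab emb) q →
      unrEntails I₀ Su Sf q := by
  exact simple_product_general Su Sf I₀ I hsub hind k w (fun R => hw.2 ⟨R, rfl⟩) G lab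
    (fun x hx y hy => hinj x y hx.1 hx.2 hy.1 hy.2) (girthGT_of_forall_fin_word hgirth) hsound
    emb hembinj hembbase

end FQA
end
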